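/- Let k be a field, and let φ : A → B be an injective morphism of commutative k-Hopf algebras. Then B is faithfully flat over A. (Equivalently: a schematically dominant morphism of affine group schemes over a field is faithfully flat.) -/

import Mathlib

open TensorProduct

namespace HopfFF

section one
variable {k B : Type*} [Field k] [CommRing B] [HopfAlgebra k B]

/-- The map `u ⊗ b ↦ Δ(u) (1 ⊗ S b)`. -/
noncomputable def shear (k B : Type*) [Field k] [CommRing B] [HopfAlgebra k B] :
    B ⊗[k] B →ₗ[k] B ⊗[k] B :=
  TensorProduct.lift ((LinearMap.mul k (B ⊗[k] B)).compl₁₂ Coalgebra.comul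
    ((Algebra.TensorProduct.includeRight (R := k) (A := B) (B := B)).toLinearMap ∘ₗ
      HopfAlgebra.antipode k))

lemma shear_tmul (u b : B) : shear k B (u ⊗ₜ b) =
    Coalgebra.comul (R := k) u * (1 ⊗ₜ[k] HopfAlgebra.antipode k b) := by
  simp [shear]

lemma shear_comul (v : B) : shear k B (Coalgebra.comul v) = v ⊗ₜ 1 := by
  have h : ∀ t : B ⊗[k] B, shear k B t =
      LinearMap.lTensor B (LinearMap.mul' k B ∘ₗ LinearMap.lTensor B (HopfAlgebra.antipode k))
        (TensorProduct.assoc k B B B (LinearMap.rTensor B Coalgebra.comul t)) := by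
    intro t
    induction t with
    | zero => simp
    | add x y hx hy => rw [map_add, hx, hy]; simp
    | tmul u b =>
      rw [shear_tmul, LinearMap.rTensor_tmul]
      induction (Coalgebra.comul (R := k) u) with
      | zero => simp
      | add x y hx hy => rw [add_mul, hx, hy, TensorProduct.add_tmul]; simp
      | tmul p q => simp
  rw [h, Coalgebra.coassoc_apply, ← LinearMap.comp_apply, ← LinearMap.lTensor_comp,
    LinearMap.comp_assoc, HopfAlgebra.mul_antipode_lTensor_comul, LinearMap.lTensor_comp,
    LinearMap.comp_apply, Coalgebra.lTensor_counit_comul]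
  simp

/-- Translation by a point is injective. -/
lemma translate_injective {K : Type*} [Field K] [Algebra k K] (x : B →ₐ[k] K) :
    Function.Injective
      ((Algebra.TensorProduct.map x (AlgHom.id k B)).comp (Bialgebra.comulAlgHom k B)) := by
  let H' : K ⊗[k] B →ₗ[k] K ⊗[k] B :=
    TensorProduct.lift ((LinearMap.mul k (K ⊗[k] B)).compl₁₂
      (Algebra.TensorProduct.includeLeft (R := k) (S := k) (A := K) (B := B)).toLinearMap
      ((TensorProduct.map (x.toLinearMap ∘ₗ HopfAlgebra.antipode k) LinearMap.id) ∘ₗ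
        Coalgebra.comul))
  have hH : ∀ t : B ⊗[k] B, H' (Algebra.TensorProduct.map x (AlgHom.id k B) t) =
      Algebra.TensorProduct.map x (AlgHom.id k B)
      (LinearMap.rTensor B (LinearMap.mul' k B ∘ₗ LinearMap.lTensor B (HopfAlgebra.antipode k))
        ((TensorProduct.assoc k B B B).symm (LinearMap.lTensor B Coalgebra.comul t))) := by
    intro t
    induction t with
    | zero => simp
    | add x y hx hy => rw [map_add, map_add, hx, hy]; simp
    | tmul u b =>
      rw [LinearMap.lTensor_tmul]
      simp only [H', Algebra.TensorProduct.map_tmul, AlgHom.coe_id, id_eq, TensorProduct.lift.tmul,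
        LinearMap.compl₁₂_apply, LinearMap.comp_apply, LinearMap.mul_apply']
      induction (Coalgebra.comul (R := k) b) with
      | zero => simp
      | add x y hx hy => rw [map_add, mul_add, hx, hy, TensorProduct.tmul_add]; simp
      | tmul p q => simp
  rw [injective_iff_map_eq_zero]
  intro a ha
  have h1 := hH (Coalgebra.comul a)
  rw [← Coalgebra.coassoc_apply, LinearEquiv.symm_apply_apply, ← LinearMap.comp_apply,
    ← LinearMap.rTensor_comp,
    LinearMap.comp_assoc, HopfAlgebra.mul_antipode_lTensor_comul, LinearMap.rTensor_comp,
    LinearMap.comp_apply, Coalgebra.rTensor_counit_comul] at h1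
  simp only [AlgHom.comp_apply, Bialgebra.comulAlgHom_apply] at ha
  rw [ha] at h1
  simp only [map_zero, LinearMap.rTensor_tmul, Algebra.linearMap_apply, map_one,
    Algebra.TensorProduct.map_tmul, AlgHom.coe_id, id_eq] at h1
  exact (Algebra.TensorProduct.includeRight_injective (R := k) (A := K) (B := B)
    (algebraMap k K).injective) (by simpa using h1.symm)

/-- The span of the pure tensors `m ⊗ b` with `m ∈ S`. -/
def box (k : Type*) {B : Type*} [Field k] [CommRing B] [HopfAlgebra k B] (S : Set B) :
    Submodule k (B ⊗[k] B) :=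
  Submodule.span k {t | ∃ m ∈ S, ∃ b : B, t = m ⊗ₜ b}

lemma box_mono {S T : Set B} (h : S ⊆ T) : box k S ≤ box k T :=
  Submodule.span_mono (by rintro t ⟨m, hm, b, rfl⟩; exact ⟨m, h hm, b, rfl⟩)

lemma local_finite (b : B) : ∃ V : Set B, V.Finite ∧ b ∈ Submodule.span k V ∧
    ∀ v ∈ V, Coalgebra.comul (R := k) v ∈ box k V := by
  classical
  let e := Module.Basis.ofVectorSpace k B
  let t := TensorProduct.equivFinsuppOfBasisRight (M := B) e (Coalgebra.comul b)
  have hrep : ∀ w : B ⊗[k] B, w = ∑ i ∈ (TensorProduct.equivFinsuppOfBasisRight (M := B) e w).support,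
      (TensorProduct.equivFinsuppOfBasisRight (M := B) e w) i ⊗ₜ[k] e i := by
    intro w
    conv_lhs => rw [← (TensorProduct.equivFinsuppOfBasisRight (M := B) e).symm_apply_apply w]
    rw [TensorProduct.equivFinsuppOfBasisRight_symm_apply]
    rfl
  have hb : Coalgebra.comul b = ∑ i ∈ t.support, t i ⊗ₜ[k] e i := hrep _
  refine ⟨t '' t.support, t.support.finite_toSet.image _, ?_, ?_⟩
  · have h2 : (TensorProduct.rid k B) (LinearMap.lTensor B Coalgebra.counit (Coalgebra.comul b))
      = b := by rw [Coalgebra.lTensor_counit_comul]; simp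
    rw [← h2, hb]
    simp only [map_sum, LinearMap.lTensor_tmul, TensorProduct.rid_tmul]
    exact Submodule.sum_mem _ fun i hi => Submodule.smul_mem _ _
      (Submodule.subset_span ⟨i, hi, rfl⟩)
  · rintro _ ⟨i, hi, rfl⟩
    let g : B ⊗[k] B →ₗ[k] B := (TensorProduct.rid k B).toLinearMap ∘ₗ LinearMap.lTensor B (e.coord i)
    have hg : ∀ w : B ⊗[k] B, TensorProduct.equivFinsuppOfBasisRight (M := B) e w i = g w := by
      intro w
      induction w with
      | zero => simp
      | add x y hx hy => rw [map_add, map_add, Finsupp.add_apply, hx, hy]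
      | tmul u b => simp [g]
    have hc : ∀ w : B ⊗[k] B, Coalgebra.comul (R := k) (g w) = LinearMap.lTensor B g
        (TensorProduct.assoc k B B B (LinearMap.rTensor B Coalgebra.comul w)) := by
      intro w
      induction w with
      | zero => simp
      | add x y hx hy => rw [map_add, map_add, hx, hy]; simp
      | tmul u b =>
        rw [LinearMap.rTensor_tmul]
        simp only [g, LinearMap.comp_apply, LinearMap.lTensor_tmul, LinearEquiv.coe_coe,
          TensorProduct.rid_tmul, map_smul]
        induction (Coalgebra.comul (R := k) u) with
        | zero => simp
        | add x y hx hy => rw [smul_add, hx, hy, TensorProduct.add_tmul]; simp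
        | tmul p q => simp
    have h3 : t i = g (Coalgebra.comul b) := hg _
    rw [h3, hc, Coalgebra.coassoc_apply, hb]
    simp only [map_sum, LinearMap.lTensor_tmul]
    exact Submodule.sum_mem _ fun j hj => Submodule.subset_span ⟨_, ⟨j, hj, rfl⟩, _, rfl⟩

lemma local_finite' (F : Set B) (hF : F.Finite) : ∃ V : Set B, V.Finite ∧
    (∀ b ∈ F, b ∈ Submodule.span k V) ∧
    ∀ v ∈ V, Coalgebra.comul (R := k) v ∈ box k V := by
  choose V h1 h2 h3 using local_finite (k := k) (B := B)
  refine ⟨⋃ b ∈ F, V b, hF.biUnion fun b _ => h1 b, fun b hb => ?_, fun v hv => ?_⟩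
  · exact Submodule.span_mono (Set.subset_biUnion_of_mem (u := V) hb) (h2 b)
  · simp only [Set.mem_iUnion] at hv
    obtain ⟨b, hb, hv⟩ := hv
    exact box_mono (Set.subset_biUnion_of_mem (u := V) hb) (h3 b v hv)

end one

lemma nakayama_basis {A N : Type*} [CommRing A] [AddCommGroup N] [Module A N] [Module.Finite A N]
    (p : Ideal A) [hp : p.IsMaximal] : ∃ (n : ℕ) (m : Fin n → N) (l : Fin n → N →ₗ[A] A ⧸ p) (f : A),
      f ∉ p ∧ (∀ i j, l j (m i) = if i = j then 1 else 0) ∧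
      ∀ b : N, ∃ c : Fin n → A, f • b = ∑ i, c i • m i := by
  classical
  letI : Field (A ⧸ p) := Ideal.Quotient.field p
  let Q := N ⧸ (p • ⊤ : Submodule A N)
  haveI : Module.Finite (A ⧸ p) Q := Module.Finite.of_restrictScalars_finite A (A ⧸ p) Q
  let e := Module.finBasis (A ⧸ p) Q
  choose m hm using fun i => Submodule.mkQ_surjective (p • ⊤ : Submodule A N) (e i)
  let S : Submodule A N := Submodule.span A (Set.range m)
  have hS : ∀ b : N, ∃ s ∈ S, b - s ∈ (p • ⊤ : Submodule A N) := by
    intro b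
    choose c hc using fun i => Ideal.Quotient.mk_surjective (I := p)
      (e.repr (Submodule.mkQ (p • ⊤ : Submodule A N) b) i)
    refine ⟨∑ i, c i • m i, Submodule.sum_mem _ fun i _ => Submodule.smul_mem _ _
      (Submodule.subset_span ⟨i, rfl⟩), ?_⟩
    refine (Submodule.Quotient.mk_eq_zero (p • ⊤ : Submodule A N)).1 ?_
    change Submodule.mkQ (p • ⊤ : Submodule A N) _ = 0
    rw [map_sub, sub_eq_zero, map_sum]
    conv_lhs => rw [← e.sum_repr (Submodule.mkQ (p • ⊤ : Submodule A N) b)]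
    refine Finset.sum_congr rfl fun i _ => ?_
    rw [map_smul, hm, ← hc]
    exact algebraMap_smul (A ⧸ p) (c i) (e i)
  obtain ⟨f, hf1, hf2⟩ := Submodule.exists_sub_one_mem_and_smul_eq_zero_of_fg_of_le_smul
    p (⊤ : Submodule A (N ⧸ S)) Module.Finite.fg_top (by
      intro y _
      obtain ⟨b, rfl⟩ := Submodule.mkQ_surjective S y
      obtain ⟨s, hs, h⟩ := hS b
      have h3 : S.mkQ b = S.mkQ (b - s) := by
        have h4 : S.mkQ s = 0 := (Submodule.Quotient.mk_eq_zero S).2 hs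
        rw [map_sub, h4, sub_zero]
      rw [h3]
      have h4 := Submodule.mem_map_of_mem (f := S.mkQ) h
      rw [Submodule.map_smul''] at h4
      exact Submodule.smul_mono le_rfl le_top h4)
  refine ⟨_, m, fun j => ((e.coord j).restrictScalars A) ∘ₗ Submodule.mkQ (p • ⊤ : Submodule A N),
    f, ?_, ?_, ?_⟩
  · intro h
    exact hp.ne_top ((Ideal.eq_top_iff_one _).2 (by simpa using p.sub_mem h hf1))
  · intro i j
    simp only [LinearMap.comp_apply, LinearMap.restrictScalars_apply, hm, Module.Basis.coord_apply,
      Module.Basis.repr_self, Finsupp.single_apply]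
  · intro b
    have h := hf2 (S.mkQ b) trivial
    rw [← map_smul, ← LinearMap.mem_ker, Submodule.ker_mkQ] at h
    obtain ⟨c, hc⟩ := (Submodule.mem_span_range_iff_exists_fun A).1 h
    exact ⟨c, hc.symm⟩

section two
variable {k A B : Type*} [Field k] [CommRing A] [CommRing B]
    [HopfAlgebra k A] [HopfAlgebra k B] [Algebra A B]

lemma box_mul (φ : A →ₐ[k] B) (hA : ∀ a, algebraMap A B a = φ a)
    (M : Submodule A B) (w : A ⊗[k] A) {u : B ⊗[k] B} (hu : u ∈ box k (M : Set B)) :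
    Algebra.TensorProduct.map φ φ w * u ∈ box k (M : Set B) := by
  induction w with
  | zero => simp
  | add x y hx hy => rw [map_add, add_mul]; exact add_mem hx hy
  | tmul a c =>
    induction hu using Submodule.span_induction with
    | mem t ht =>
      obtain ⟨m, hm, b, rfl⟩ := ht
      refine Submodule.subset_span ⟨a • m, M.smul_mem a hm, φ c * b, ?_⟩
      simp [Algebra.smul_def, hA]
    | zero => simp
    | add x y _ _ hx hy => rw [mul_add]; exact add_mem hx hy
    | smul r x _ hx => rw [mul_smul_comm]; exact Submodule.smul_mem _ _ hx

lemma comul_smul (φ : A →ₐc[k] B) (hA : ∀ a, algebraMap A B a = φ a) (a : A) (m : B) :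
    Coalgebra.comul (R := k) (a • m) =
      Algebra.TensorProduct.map (φ : A →ₐ[k] B) (φ : A →ₐ[k] B) (Coalgebra.comul a) *
        Coalgebra.comul m := by
  rw [Algebra.smul_def, Bialgebra.comul_mul, hA, ← CoalgHomClass.map_comp_comul_apply]
  rfl

lemma exists_stable (φ : A →ₐc[k] B) (hA : ∀ a, algebraMap A B a = φ a)
    (F : Set B) (hF : F.Finite) : ∃ M : Submodule A B, M.FG ∧ F ⊆ M ∧
      ∀ m ∈ M, Coalgebra.comul (R := k) m ∈ box k (M : Set B) := by
  obtain ⟨V, h1, h2, h3⟩ := local_finite' (k := k) F hF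
  refine ⟨Submodule.span A V, ⟨h1.toFinset, by simp⟩, fun b hb => ?_, fun m hm => ?_⟩
  · have hks : ∀ (c : k) (b : B), c • b = algebraMap k A c • b := by
      intro c b
      rw [Algebra.smul_def, Algebra.smul_def, hA, AlgHomClass.commutes]
    have hmem : ∀ y ∈ Submodule.span k V, y ∈ Submodule.span A V := by
      intro y hy
      induction hy using Submodule.span_induction with
      | mem t ht => exact Submodule.subset_span ht
      | zero => exact zero_mem _
      | add x y _ _ hx hy => exact add_mem hx hy
      | smul r x _ hx => rw [hks]; exact Submodule.smul_mem _ _ hx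
    exact hmem b (h2 b hb)
  · induction hm using Submodule.span_induction with
    | mem t ht => exact box_mono Submodule.subset_span (h3 t ht)
    | zero => simp
    | add x y _ _ hx hy => rw [map_add]; exact add_mem hx hy
    | smul r x _ hx => rw [comul_smul φ hA]; exact box_mul _ hA _ _ hx

variable {K : Type*} [Field K] [Algebra k K]

lemma theta_mul (φ : A →ₐ[k] B) (hA : ∀ a, algebraMap A B a = φ a) (x : A →ₐ[k] K)
    (M : Submodule A B) (l : B →ₗ[k] K) (hl : ∀ a : A, ∀ m ∈ M, l (a • m) = x a * l m)
    (w : A ⊗[k] A) {u : B ⊗[k] B} (hu : u ∈ box k (M : Set B)) :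
    TensorProduct.map l LinearMap.id (Algebra.TensorProduct.map φ φ w * u) =
      Algebra.TensorProduct.map x φ w * TensorProduct.map l LinearMap.id u := by
  induction w with
  | zero => simp
  | add x y hx hy => rw [map_add, add_mul, map_add, hx, hy, map_add, add_mul]
  | tmul a c =>
    induction hu using Submodule.span_induction with
    | mem t ht =>
      obtain ⟨m, hm, b, rfl⟩ := ht
      simp [← hl a m hm, Algebra.smul_def, hA]
    | zero => simp
    | add x y _ _ hx hy => rw [mul_add, map_add, hx, hy, map_add, mul_add]
    | smul r x _ hx => rw [mul_smul_comm, map_smul, hx, map_smul, mul_smul_comm]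

lemma theta_right (l : B →ₗ[k] K) (u : B ⊗[k] B) (b : B) :
    TensorProduct.map l LinearMap.id (u * (1 ⊗ₜ b)) =
      TensorProduct.map l LinearMap.id u * (1 ⊗ₜ[k] b) := by
  induction u with
  | zero => simp
  | add x y hx hy => rw [add_mul, map_add, hx, hy, map_add, add_mul]
  | tmul a c => simp

/-- The twisted embedding `a ↦ ∑ x(a₁) ⊗ φ(a₂)`. -/
noncomputable def psi (φ : A →ₐ[k] B) (x : A →ₐ[k] K) : A →ₐ[k] K ⊗[k] B :=
  (Algebra.TensorProduct.map x φ).comp (Bialgebra.comulAlgHom k A)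

lemma psi_injective (φ : A →ₐ[k] B) (hφ : Function.Injective φ) (x : A →ₐ[k] K) :
    Function.Injective (psi φ x) := by
  have h : psi φ x = (Algebra.TensorProduct.map (AlgHom.id k K) φ).comp
      ((Algebra.TensorProduct.map x (AlgHom.id k A)).comp (Bialgebra.comulAlgHom k A)) := by
    rw [← AlgHom.comp_assoc, ← Algebra.TensorProduct.map_comp]
    rfl
  rw [h, AlgHom.coe_comp]
  refine Function.Injective.comp ?_ (translate_injective x)
  exact Module.Flat.lTensor_preserves_injective_linearMap (M := K) φ.toLinearMap hφ

lemma core (φ : A →ₐc[k] B) (hφ : Function.Injective φ) (hA : ∀ a, algebraMap A B a = φ a)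
    (x : A →ₐ[k] K) (M : Submodule A B)
    (hM : ∀ m ∈ M, Coalgebra.comul (R := k) m ∈ box k (M : Set B))
    {ι : Type*} [Fintype ι] [DecidableEq ι] (m : ι → B) (hm : ∀ i, m i ∈ M)
    (l : ι → B →ₗ[k] K) (hl : ∀ j, ∀ a : A, ∀ m ∈ M, l j (a • m) = x a * l j m)
    (hlm : ∀ i j, l j (m i) = if i = j then 1 else 0)
    (f : A) (hf : ∀ b ∈ M, ∃ c : ι → A, f • b = ∑ i, c i • m i)
    (r : ι → A)
    (hr : ∀ j, TensorProduct.map (l j) LinearMap.id (Coalgebra.comul (R := k) (∑ i, r i • m i)) = 0) :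
    ∃ n : ℕ, ∀ i, f ^ n * r i = 0 := by
  let θ : ι → B → K ⊗[k] B := fun j b => TensorProduct.map (l j) LinearMap.id (Coalgebra.comul (R := k) b)
  let ψ := psi (φ : A →ₐ[k] B) x
  have hθ : ∀ j, ∀ a : A, ∀ m ∈ M, θ j (a • m) = ψ a * θ j m := by
    intro j a m hm
    simp only [θ, comul_smul φ hA]
    exact theta_mul _ hA x M (l j) (hl j) _ (hM m hm)
  have hθs : ∀ j, ∀ c : ι → A, θ j (∑ i, c i • m i) = ∑ i, θ j (m i) * ψ (c i) := by
    intro j c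
    have : θ j (∑ i, c i • m i) = ∑ i, θ j (c i • m i) := by simp [θ, map_sum]
    rw [this]
    exact Finset.sum_congr rfl fun i _ => by rw [hθ j _ _ (hm i), mul_comm]
  have key : ∀ t ∈ box k (M : Set B), ∃ q : ι → K ⊗[k] B, ∀ j,
      ψ f * TensorProduct.map (l j) LinearMap.id (shear k B t) = ∑ i, θ j (m i) * q i := by
    intro t ht
    induction ht using Submodule.span_induction with
    | mem t ht =>
      obtain ⟨u, hu, b, rfl⟩ := ht
      obtain ⟨c, hc⟩ := hf u hu
      refine ⟨fun i => ψ (c i) * (1 ⊗ₜ HopfAlgebra.antipode k b), fun j => ?_⟩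
      rw [shear_tmul, theta_right, ← mul_assoc]
      have h1 : ψ f * TensorProduct.map (l j) LinearMap.id (Coalgebra.comul (R := k) u)
        = θ j (f • u) := (hθ j f u hu).symm
      rw [h1, hc, hθs, Finset.sum_mul]
      simp only [mul_assoc]
    | zero => exact ⟨0, by simp⟩
    | add y z _ _ hy hz =>
      obtain ⟨q, hq⟩ := hy
      obtain ⟨q', hq'⟩ := hz
      exact ⟨q + q', fun j => by simp only [map_add, mul_add, hq, hq', Pi.add_apply,
        Finset.sum_add_distrib]⟩
    | smul s y _ hy =>
      obtain ⟨q, hq⟩ := hy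
      exact ⟨s • q, fun j => by
        simp only [map_smul, mul_smul_comm, hq, Pi.smul_apply, Finset.smul_sum]⟩
  choose q hq using fun i => key _ (hM (m i) (hm i))
  let P : Matrix ι ι (K ⊗[k] B) := Matrix.of fun j i => θ j (m i)
  let Q : Matrix ι ι (K ⊗[k] B) := Matrix.of fun i l => q l i
  have hPQ : P * Q = ψ f • (1 : Matrix ι ι (K ⊗[k] B)) := by
    ext j i
    have := hq i j
    rw [shear_comul, TensorProduct.map_tmul, hlm] at this
    rw [Matrix.mul_apply, Matrix.smul_apply, Matrix.one_apply]
    simp only [P, Q, Matrix.of_apply]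
    rw [← this]
    by_cases h : i = j
    · subst h; simp [Algebra.TensorProduct.one_def]
    · simp [h, Ne.symm h]
  have hPr : P.mulVec (fun i => ψ (r i)) = 0 := by
    ext j
    have h1 := hr j
    have h2 := hθs j r
    simp only [θ] at h2
    rw [h1] at h2
    simpa [Matrix.mulVec, dotProduct, P, θ] using h2.symm
  have hdet : ∀ i, P.det * ψ (r i) = 0 := by
    intro i
    have h1 := congrArg (P.adjugate.mulVec) hPr
    rw [Matrix.mulVec_mulVec, Matrix.adjugate_mul, Matrix.mulVec_zero, Matrix.smul_mulVec,
      Matrix.one_mulVec] at h1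
    exact congrFun h1 i
  refine ⟨Fintype.card ι, fun i => psi_injective (φ : A →ₐ[k] B) hφ x ?_⟩
  have h2 : P.det * Q.det = ψ f ^ Fintype.card ι := by
    rw [← Matrix.det_mul, hPQ, Matrix.det_smul, Matrix.det_one, mul_one]
  change ψ (f ^ Fintype.card ι * r i) = ψ 0
  rw [map_mul, map_pow, ← h2, map_zero, mul_right_comm, hdet, zero_mul]

lemma key (φ : A →ₐc[k] B) (hφ : Function.Injective φ) (hA : ∀ a, algebraMap A B a = φ a)
    (F : Set B) (hF : F.Finite) (p : Ideal A) [hp : p.IsMaximal] :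
    ∃ (M : Submodule A B) (n : ℕ) (m : Fin n → B) (f : A), F ⊆ M ∧ f ∉ p ∧
      (∀ b ∈ M, ∃ c : Fin n → A, f • b = ∑ i, c i • m i) ∧
      (∀ r : Fin n → A, ∑ i, r i • m i = 0 → ∃ N : ℕ, ∀ i, f ^ N * r i = 0) ∧
      (1 ∉ p • M) := by
  classical
  obtain ⟨M, hfg, hFM, hM⟩ := exists_stable φ hA F hF
  haveI : Module.Finite A M := Module.Finite.iff_fg.2 hfg
  obtain ⟨n, m, l, f, hfp, hlm, hf⟩ := nakayama_basis (N := M) p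
  letI : Field (A ⧸ p) := Ideal.Quotient.field p
  have hks : ∀ (c : k) (b : B), c • b = algebraMap k A c • b := by
    intro c b
    rw [Algebra.smul_def, Algebra.smul_def, hA, AlgHomClass.commutes]
  let M' : Submodule k B := { M with smul_mem' := fun c b hb => by rw [hks]; exact M.smul_mem _ hb }
  let l' : Fin n → M' →ₗ[k] A ⧸ p := fun j =>
    { toFun := fun b => l j ⟨b.1, b.2⟩
      map_add' := fun a b => (l j).map_add ⟨a.1, a.2⟩ ⟨b.1, b.2⟩
      map_smul' := fun c b => by
        have h1 : (⟨(c • b).1, (c • b).2⟩ : M) = algebraMap k A c • (⟨b.1, b.2⟩ : M) :=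
          Subtype.ext (hks c b.1)
        rw [h1, map_smul, algebraMap_smul]; rfl }
  choose L hL using fun j => LinearMap.exists_extend (l' j)
  have hL' : ∀ j b (hb : b ∈ M), L j b = l j ⟨b, hb⟩ := by
    intro j b hb
    exact LinearMap.congr_fun (hL j) ⟨b, hb⟩
  have hf' : ∀ b ∈ M, ∃ c : Fin n → A, f • b = ∑ i, c i • (m i : B) := by
    intro b hb
    obtain ⟨c, hc⟩ := hf ⟨b, hb⟩
    exact ⟨c, by simpa using congrArg Subtype.val hc⟩
  have hcore := core φ hφ hA (Ideal.Quotient.mkₐ k p) M hM (fun i => (m i : B)) (fun i => (m i).2) L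
    (fun j a b hb => by
      rw [hL' j b hb, hL' j _ (M.smul_mem a hb)]
      have : (⟨a • b, M.smul_mem a hb⟩ : M) = a • ⟨b, hb⟩ := rfl
      rw [this, map_smul]
      exact Algebra.smul_def _ _) (fun i j => by rw [hL' j _ (m i).2]; exact hlm i j) f hf'
  refine ⟨M, n, fun i => m i, f, hFM, hfp, hf', fun r hr => hcore r (by simp [hr]), fun h1 => ?_⟩
  have h1M : (1 : B) ∈ M := Submodule.smul_le_right h1
  have hl1 : ∀ j, ∀ b ∈ p • M, L j b = 0 := by
    intro j b hb
    induction hb using Submodule.smul_induction_on' with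
    | smul a ha b hb =>
      rw [hL' j _ (M.smul_mem a hb)]
      have : (⟨a • b, M.smul_mem a hb⟩ : M) = a • ⟨b, hb⟩ := rfl
      rw [this, map_smul, Algebra.smul_def, Ideal.Quotient.algebraMap_eq,
        Ideal.Quotient.eq_zero_iff_mem.2 ha, zero_mul]
    | add b hb c hc h h' => rw [map_add, h, h', add_zero]
  obtain ⟨r, hr⟩ := hf' 1 h1M
  obtain ⟨N, hN⟩ := hcore r (fun j => by
    rw [← hr, comul_smul φ hA, theta_mul _ hA (Ideal.Quotient.mkₐ k p) M (L j) ?_ _ (hM 1 h1M)]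
    · rw [Bialgebra.comul_one, Algebra.TensorProduct.one_def, TensorProduct.map_tmul, hl1 j 1 h1]
      simp
    · intro a b hb
      rw [hL' j b hb, hL' j _ (M.smul_mem a hb)]
      have : (⟨a • b, M.smul_mem a hb⟩ : M) = a • ⟨b, hb⟩ := rfl
      rw [this, map_smul]
      exact Algebra.smul_def _ _)
  have h2 : f ^ N • f • (1 : B) = 0 := by
    rw [hr, Finset.smul_sum]
    exact Finset.sum_eq_zero fun i _ => by rw [smul_smul, hN, zero_smul]
  rw [smul_smul, Algebra.smul_def, mul_one, hA, ← map_zero φ] at h2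
  have h3 : f ^ (N + 1) = 0 := by rw [pow_succ]; exact hφ h2
  exact hfp (hp.isPrime.mem_of_pow_mem (N + 1) (h3 ▸ p.zero_mem))

theorem main (φ : A →ₐc[k] B) (hφ : Function.Injective φ) (hA : ∀ a, algebraMap A B a = φ a) :
    Module.FaithfullyFlat A B := by
  classical
  haveI : Module.Flat A B := by
    rw [Module.Flat.iff_rTensor_injective']
    intro I
    rw [injective_iff_map_eq_zero]
    intro t ht
    obtain ⟨S, rfl⟩ := TensorProduct.exists_finset t
    simp only [map_sum, LinearMap.rTensor_tmul, Submodule.subtype_apply] at ht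
    have ht' : ∑ i ∈ S, (i.1 : A) • i.2 = 0 := by
      simpa using congrArg (TensorProduct.lid A B) ht
    set t := ∑ i ∈ S, i.1 ⊗ₜ[A] i.2 with htdef
    let J : Ideal A := LinearMap.ker (LinearMap.toSpanSingleton A _ t)
    have hJ : J = ⊤ := by
      by_contra hne
      obtain ⟨p, hp, hJp⟩ := Ideal.exists_le_maximal J hne
      obtain ⟨M, n, m, f, hFM, hfp, hf, hfree, -⟩ := key φ hφ hA (S.image Prod.snd : Finset B)
        (Finset.finite_toSet _) p
      have hc : ∀ i : I × B, ∃ c : Fin n → A, i ∈ S → f • i.2 = ∑ j, c j • m j := by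
        intro i
        by_cases hi : i ∈ S
        · obtain ⟨c, hc⟩ := hf i.2 (hFM (Finset.mem_coe.2 (Finset.mem_image_of_mem Prod.snd hi)))
          exact ⟨c, fun _ => hc⟩
        · exact ⟨0, fun h => absurd h hi⟩
      choose c hc using hc
      obtain ⟨N, hN⟩ := hfree (fun j => ∑ i ∈ S, c i j * i.1) (by
        have : f • ∑ i ∈ S, (i.1 : A) • i.2 = 0 := by rw [ht', smul_zero]
        rw [← this, Finset.smul_sum]
        simp only [Finset.sum_smul]
        rw [Finset.sum_comm]
        refine Finset.sum_congr rfl fun i hi => ?_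
        rw [smul_comm, hc i hi, Finset.smul_sum]
        exact Finset.sum_congr rfl fun j _ => by rw [smul_smul, mul_comm])
      have h1 : f • t = ∑ j, (∑ i ∈ S, c i j • i.1) ⊗ₜ[A] m j := by
        simp only [TensorProduct.sum_tmul]
        rw [Finset.sum_comm, htdef, Finset.smul_sum]
        refine Finset.sum_congr rfl fun i hi => ?_
        rw [← TensorProduct.tmul_smul, hc i hi, TensorProduct.tmul_sum]
        exact Finset.sum_congr rfl fun j _ => by rw [TensorProduct.smul_tmul]
      have h2 : f ^ (N + 1) ∈ J := by
        change f ^ (N + 1) • t = 0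
        rw [pow_succ, mul_smul, h1, Finset.smul_sum]
        refine Finset.sum_eq_zero fun j _ => ?_
        rw [TensorProduct.smul_tmul']
        have : f ^ N • (∑ i ∈ S, c i j • i.1) = 0 := Subtype.ext (by simpa using hN j)
        rw [this, TensorProduct.zero_tmul]
      exact hfp (hp.isPrime.mem_of_pow_mem _ (hJp h2))
    have h1 : (1 : A) ∈ J := hJ ▸ Submodule.mem_top
    have h2 : (1 : A) • t = 0 := h1
    rwa [one_smul] at h2
  refine ⟨fun p hp htop => ?_⟩
  have h1 : (1 : B) ∈ p • (⊤ : Submodule A B) := by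
    rw [htop]; exact Submodule.mem_top
  have h2 : ∀ y ∈ p • (⊤ : Submodule A B),
      ∃ F : Finset B, ∀ M : Submodule A B, (F : Set B) ⊆ M → y ∈ p • M := by
    intro y hy
    induction hy using Submodule.smul_induction_on' with
    | smul a ha b hb =>
      exact ⟨{b}, fun M hM => Submodule.smul_mem_smul ha (hM (by simp))⟩
    | add b hb c hc h h' =>
      obtain ⟨F, hF⟩ := h
      obtain ⟨F', hF'⟩ := h'
      exact ⟨F ∪ F', fun M hM => add_mem (hF M fun x hx => hM (by simp; exact Or.inl hx))
        (hF' M fun x hx => hM (by simp; exact Or.inr hx))⟩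
  obtain ⟨F, hF⟩ := h2 1 h1
  obtain ⟨M, n, m, f, hFM, -, -, -, h⟩ := key φ hφ hA (F : Set B) F.finite_toSet p
  exact h (hF M hFM)

end two
end HopfFF

/-- Let `k` be a field and `φ : A → B` an injective morphism of commutative
`k`-Hopf algebras.  Then `B` is faithfully flat over `A` (with the `A`-algebra structure on
`B` given by `φ`): a schematically dominant morphism of affine group schemes over a field is
faithfully flat. -/
theorem hopf_injective_faithfully_flat
    (k A B : Type*) [Field k] [CommRing A] [CommRing B]
    [HopfAlgebra k A] [HopfAlgebra k B]
    (φ : A →ₐc[k] B) (hφ : Function.Injective φ) :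
    letI : Algebra A B := ((φ : A →ₐ[k] B).toRingHom).toAlgebra
    Module.FaithfullyFlat A B := by
  letI : Algebra A B := ((φ : A →ₐ[k] B).toRingHom).toAlgebra
  exact HopfFF.main φ hφ fun _ => rfl
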